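/- Let p be a prime, R a δ-ring, ξ ∈ R, A a δ-R-algebra, and T ∈ A. Let B = A[S_0,S_1,S_2,…] be the polynomial ring over A in countably many variables equipped with a δ-structure extending that of A and satisfying δ(S_n) = S_{n+1} for all n; write S = S_0, so δ^n(S) = S_n. For an integer n ≥ −1 let B_n be the A-subalgebra of B generated by S_0,…,S_n (with B_{−1} = A). Then for every positive integer n there exist c_0,…,c_{p−1} ∈ B_{n−2} such that δ^n(ξ·S − T) = φ^n(ξ)·S_n + (∑_{m=0}^{n−1} p^{m(p−1)})·φ^{n−1}(δ(ξ))·S_{n−1}^p + ∑_{ν=0}^{p−1} c_ν·S_{n−1}^ν, where φ denotes the Frobenius lift x ↦ x^p + p·δ(x). -/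

import Mathlib

/-!
Write `sₙ = δⁿ(s)`, let `Bₙ` be the `A`-subalgebra generated by `s₀, …, sₙ₋₁`, and let `Mₙ` be the
`Bₙ`-module of polynomials of degree `< p` in `sₙ`. The failure of `δ` to be additive lies in `Bₙ`
for two elements of `Bₙ`, and in `Mₙ` for `a sₙ` and an element of `Bₙ`. Together with the twisted
Leibniz rule `δ(xy) = δ(x) yᵖ + φ(x) δ(y)` this shows that `δ` maps `Mₙ` into `Mₙ₊₁`, and that
`x ≡ a sₙ₊₁ + b sₙᵖ` modulo `Mₙ` implies
`δ(x) ≡ φ(a) sₙ₊₂ + (δ(a) + pᵖ⁻¹ φ(b)) sₙ₊₁ᵖ` modulo `Mₙ₊₁`,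
where `pᵖ⁻¹` is the top coefficient of `δ(sₙᵖ)` as a polynomial in `sₙ₊₁`. Since `δ` and `φ`
commute, iterating this recursion yields the geometric sum.
-/

/-- A δ-structure on a commutative ring `R`, relative to a prime `p`. -/
structure DeltaStructure (p : ℕ) (R : Type*) [CommRing R] where
  δ : R → R
  delta_zero : δ 0 = 0
  delta_one : δ 1 = 0
  delta_add : ∀ x y : R, δ (x + y) =
    δ x + δ y - ∑ i ∈ Finset.Ioo 0 p, ((p.choose i / p : ℕ) : R) * x ^ i * y ^ (p - i)
  delta_mul : ∀ x y : R, δ (x * y) =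
    δ x * y ^ p + x ^ p * δ y + (p : R) * δ x * δ y

/-- The polynomial `((x + y) ^ p - x ^ p - y ^ p) / p`, with its integral coefficients
`p.choose i / p`. It measures the failure of a `p`-derivation to be additive. -/
def powAddDefect {R : Type*} [CommRing R] (p : ℕ) (x y : R) : R :=
  ∑ i ∈ Finset.Ioo 0 p, ((p.choose i / p : ℕ) : R) * x ^ i * y ^ (p - i)

section powAddDefect

variable {R R' : Type*} [CommRing R] [CommRing R'] {p : ℕ}

theorem add_pow_prime_eq_powAddDefect [Fact p.Prime] (x y : R) :
    (x + y) ^ p = x ^ p + y ^ p + p * powAddDefect p x y := by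
  rw [add_pow_prime_eq' Fact.out, powAddDefect]
  congr 2
  exact Finset.sum_congr rfl fun i _ => by ring

theorem map_powAddDefect (f : R →+* R') (x y : R) :
    f (powAddDefect p x y) = powAddDefect p (f x) (f y) := by
  simp only [powAddDefect, map_sum, map_mul, map_pow, map_natCast]

theorem powAddDefect_natCast_mul [Fact p.Prime] (x y : R) :
    powAddDefect p (p * x) y = ∑ j ∈ Finset.range (p - 1),
      (p.choose (j + 1) : R) * p ^ j * y ^ (p - (j + 1)) * x ^ (j + 1) := by
  have hp : p.Prime := Fact.out
  have hIoo : Finset.Ioo 0 p = Finset.Ico (0 + 1) (p - 1 + 1) := by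
    rw [Nat.sub_add_cancel hp.one_le]; rfl
  rw [powAddDefect, hIoo, ← Finset.sum_Ico_add', ← Finset.range_eq_Ico]
  refine Finset.sum_congr rfl fun j hj => ?_
  have hjp : j + 1 < p := Nat.add_lt_of_lt_sub (Finset.mem_range.1 hj)
  have hchoose : (p : R) * (p.choose (j + 1) / p : ℕ) = p.choose (j + 1) := by
    rw [← Nat.cast_mul, Nat.mul_div_cancel' (hp.dvd_choose_self j.succ_ne_zero hjp)]
  rw [← hchoose]
  ring

theorem powAddDefect_mem {A : Type*} [CommRing A] [Algebra A R] {S : Subalgebra A R} {x y : R}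
    (hx : x ∈ S) (hy : y ∈ S) : powAddDefect p x y ∈ S :=
  sum_mem fun _ _ => mul_mem (mul_mem (natCast_mem _ _) (pow_mem hx _)) (pow_mem hy _)

end powAddDefect

/-- The `S`-module of polynomials of degree `< d` in `y` with coefficients in `S`. -/
def spanPowLT {A B : Type*} [CommRing A] [CommRing B] [Algebra A B] (S : Subalgebra A B) (y : B)
    (d : ℕ) : Submodule S B :=
  Submodule.span S ((y ^ ·) '' Finset.range d)

section spanPowLT

variable {A B : Type*} [CommRing A] [CommRing B] [Algebra A B] {S : Subalgebra A B} {c x y : B}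
  {d p : ℕ}

theorem mul_mem_spanPowLT (hc : c ∈ S) (hx : x ∈ spanPowLT S y d) : c * x ∈ spanPowLT S y d :=
  (spanPowLT S y d).smul_mem ⟨c, hc⟩ hx

theorem mul_pow_mem_spanPowLT (hc : c ∈ S) {i : ℕ} (hi : i < d) : c * y ^ i ∈ spanPowLT S y d :=
  mul_mem_spanPowLT hc (Submodule.subset_span ⟨i, Finset.mem_range.2 hi, rfl⟩)

theorem mem_spanPowLT_of_mem (hc : c ∈ S) (hd : 0 < d) : c ∈ spanPowLT S y d := by
  simpa using mul_pow_mem_spanPowLT (y := y) hc hd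

theorem exists_eq_sum_of_mem_spanPowLT (hx : x ∈ spanPowLT S y d) :
    ∃ c : ℕ → B, (∀ i, c i ∈ S) ∧ x = ∑ i ∈ Finset.range d, c i * y ^ i := by
  obtain ⟨c, rfl⟩ := Submodule.mem_span_image_finset_iff_exists_fun' S |>.1 hx
  exact ⟨fun i => c i, fun i => (c i).2, rfl⟩

theorem spanPowLT_subset {S' : Subalgebra A B} (hS : S ≤ S') (hy : y ∈ S')
    (hx : x ∈ spanPowLT S y d) : x ∈ S' := by
  obtain ⟨c, hc, rfl⟩ := exists_eq_sum_of_mem_spanPowLT hx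
  exact sum_mem fun i _ => mul_mem (hS (hc i)) (pow_mem hy i)

theorem powAddDefect_mul_mem_spanPowLT (hc : c ∈ S) (hx : x ∈ S) :
    powAddDefect p (c * y) x ∈ spanPowLT S y p := by
  refine sum_mem fun i hi => ?_
  have hcoeff : ((p.choose i / p : ℕ) : B) * c ^ i * x ^ (p - i) ∈ S :=
    mul_mem (mul_mem (natCast_mem _ _) (pow_mem hc _)) (pow_mem hx _)
  convert mul_pow_mem_spanPowLT hcoeff (Finset.mem_Ioo.1 hi).2 using 1
  ring

end spanPowLT

namespace DeltaStructure

section Frobenius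

variable {p : ℕ} {R : Type*} [CommRing R] (D : DeltaStructure p R)

theorem delta_add_eq_sub_powAddDefect (x y : R) :
    D.δ (x + y) = D.δ x + D.δ y - powAddDefect p x y :=
  D.delta_add x y

variable {D} in
theorem iterate_delta_of_delta_eq_succ {x : ℕ → R} (hx : ∀ n, D.δ (x n) = x (n + 1)) (n : ℕ) :
    D.δ^[n] (x 0) = x n := by
  induction n with
  | zero => rfl
  | succ n ih => rw [Function.iterate_succ_apply', ih, hx]

variable [Fact p.Prime]

/-- The Frobenius lift `φ(x) = x ^ p + p * δ(x)` attached to a δ-structure. -/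
def frobeniusLift : R →+* R where
  toFun x := x ^ p + p * D.δ x
  map_zero' := by simp [D.delta_zero, (Fact.out : p.Prime).ne_zero]
  map_one' := by simp [D.delta_one]
  map_add' x y := by
    rw [delta_add_eq_sub_powAddDefect, add_pow_prime_eq_powAddDefect]; ring
  map_mul' x y := by rw [D.delta_mul]; ring

theorem frobeniusLift_apply (x : R) : D.frobeniusLift x = x ^ p + p * D.δ x := rfl

variable {D} in
theorem map_frobeniusLift {R' : Type*} [CommRing R'] {D' : DeltaStructure p R'}
    {f : R →+* R'} (hf : ∀ x, D'.δ (f x) = f (D.δ x)) (x : R) :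
    f (D.frobeniusLift x) = D'.frobeniusLift (f x) := by
  simp only [frobeniusLift_apply, hf, map_add, map_mul, map_pow, map_natCast]

variable {D} in
theorem map_frobeniusLift_iterate {R' : Type*} [CommRing R'] {D' : DeltaStructure p R'}
    {f : R →+* R'} (hf : ∀ x, D'.δ (f x) = f (D.δ x)) (n : ℕ) (x : R) :
    f (D.frobeniusLift^[n] x) = D'.frobeniusLift^[n] (f x) :=
  Function.Semiconj.iterate_right (map_frobeniusLift hf) n x

theorem delta_mul_eq_frobeniusLift (x y : R) :
    D.δ (x * y) = D.δ x * y ^ p + D.frobeniusLift x * D.δ y := by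
  rw [D.delta_mul, frobeniusLift_apply]; ring

theorem delta_pow (x : R) (m : ℕ) :
    D.δ (x ^ m) = ∑ j ∈ Finset.range m,
      (m.choose (j + 1) : R) * p ^ j * (x ^ p) ^ (m - (j + 1)) * D.δ x ^ (j + 1) := by
  induction m with
  | zero => simp [D.delta_one]
  | succ m ih =>
    have hbinom : D.frobeniusLift x ^ m * D.δ x = ∑ j ∈ Finset.range (m + 1),
        (m.choose j : R) * p ^ j * (x ^ p) ^ (m - j) * D.δ x ^ (j + 1) := by
      rw [frobeniusLift_apply, add_comm, add_pow, Finset.sum_mul]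
      exact Finset.sum_congr rfl fun j _ => by ring
    have hprev : D.δ (x ^ m) * x ^ p = ∑ j ∈ Finset.range (m + 1),
        (m.choose (j + 1) : R) * p ^ j * (x ^ p) ^ (m - j) * D.δ x ^ (j + 1) := by
      rw [ih, Finset.sum_mul, Finset.sum_range_succ, Nat.choose_succ_self, Nat.cast_zero, zero_mul,
        zero_mul, zero_mul, add_zero]
      refine Finset.sum_congr rfl fun j hj => ?_
      rw [← Nat.sub_add_cancel (Nat.sub_pos_of_lt (Finset.mem_range.1 hj)), Nat.sub_sub]
      ring
    rw [pow_succ, delta_mul_eq_frobeniusLift, map_pow, hbinom, hprev, ← Finset.sum_add_distrib]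
    refine Finset.sum_congr rfl fun j _ => ?_
    rw [Nat.choose_succ_succ, Nat.cast_add, Nat.succ_sub_succ]
    ring

theorem delta_pow_prime (x : R) :
    D.δ (x ^ p) = p ^ (p - 1) * D.δ x ^ p + powAddDefect p (p * D.δ x) (x ^ p) := by
  have hp : p - 1 + 1 = p := Nat.sub_add_cancel (Fact.out : p.Prime).one_le
  have hrange : Finset.range p = Finset.range (p - 1 + 1) := by rw [hp]
  rw [delta_pow, powAddDefect_natCast_mul, hrange, Finset.sum_range_succ, hp, Nat.choose_self,
    Nat.sub_self]
  ring

-- `p` may be a zero divisor in `R`, so the quotient `(n - n ^ p) / p` has to be formed in `ℤ`.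
theorem delta_natCast (n : ℕ) {e : ℤ} (he : p * e = n - n ^ p) : D.δ n = e := by
  have hp : p ≠ 0 := (Fact.out : p.Prime).ne_zero
  induction n generalizing e with
  | zero =>
    obtain rfl : e = 0 := by simpa [hp] using he
    simp [D.delta_zero]
  | succ n ih =>
    have hn : p * (e + powAddDefect p (n : ℤ) 1) = n - n ^ p := by
      have hpow := add_pow_prime_eq_powAddDefect (p := p) (n : ℤ) 1
      push_cast at he
      rw [one_pow] at hpow
      linear_combination he - hpow
    have hdefect : ((powAddDefect p (n : ℤ) 1 : ℤ) : R) = powAddDefect p (n : R) 1 := by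
      simpa using map_powAddDefect (p := p) (Int.castRingHom R) n 1
    rw [Nat.cast_succ, delta_add_eq_sub_powAddDefect, ih hn, D.delta_one, Int.cast_add, hdefect]
    ring

theorem delta_natCast_prime : D.δ (p : R) = 1 - p ^ (p - 1) := by
  rw [D.delta_natCast p (e := 1 - p ^ (p - 1))]
  · push_cast; rfl
  · rw [mul_sub, mul_one, mul_pow_sub_one (Fact.out : p.Prime).ne_zero]

theorem delta_natCast_prime_mul (x : R) :
    D.δ (p * x) = D.frobeniusLift x - p ^ (p - 1) * x ^ p := by
  rw [delta_mul_eq_frobeniusLift, delta_natCast_prime, map_natCast, frobeniusLift_apply]; ring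

theorem delta_frobeniusLift (x : R) : D.δ (D.frobeniusLift x) = D.frobeniusLift (D.δ x) := by
  rw [frobeniusLift_apply, add_comm, delta_add_eq_sub_powAddDefect, delta_natCast_prime_mul,
    delta_pow_prime]
  ring

theorem delta_frobeniusLift_iterate (n : ℕ) (x : R) :
    D.δ (D.frobeniusLift^[n] x) = D.frobeniusLift^[n] (D.δ x) :=
  Function.Commute.iterate_right D.delta_frobeniusLift n x

theorem delta_iterate_add_frobeniusLift_geomSum (n : ℕ) (x : R) :
    D.δ (D.frobeniusLift^[n + 1] x) + p ^ (p - 1) * D.frobeniusLift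
        ((∑ m ∈ Finset.range (n + 1), (p : R) ^ (m * (p - 1))) * D.frobeniusLift^[n] (D.δ x)) =
      (∑ m ∈ Finset.range (n + 2), (p : R) ^ (m * (p - 1))) *
        D.frobeniusLift^[n + 1] (D.δ x) := by
  have hgeom : ∑ m ∈ Finset.range (n + 2), (p : R) ^ (m * (p - 1)) =
      (∑ m ∈ Finset.range (n + 1), (p : R) ^ (m * (p - 1))) * p ^ (p - 1) + 1 := by
    rw [Finset.sum_range_succ']
    simp only [add_one_mul, pow_add, Finset.sum_mul, zero_mul, pow_zero]
  rw [delta_frobeniusLift_iterate, map_mul, ← Function.iterate_succ_apply' D.frobeniusLift, hgeom]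
  simp only [map_sum, map_pow, map_natCast]
  ring

end Frobenius

section Jets

variable {p n : ℕ} {A B : Type*} [CommRing A] [CommRing B] [Algebra A B]
  {DA : DeltaStructure p A} (D : DeltaStructure p B) (s : B)

variable (A) in
/-- The `A`-subalgebra generated by the iterates `δ^m(s)` with `m < n`; the bound is strict, so this
is the algebra usually written `B_{n-1}`. -/
def jetSubalgebra (n : ℕ) : Subalgebra A B :=
  Algebra.adjoin A {x : B | ∃ m : ℕ, m < n ∧ x = D.δ^[m] s}

variable (A) in
/-- Polynomials of degree `< p` in `δ^n(s)` with coefficients in the subalgebra generated by the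
earlier iterates: the error terms of the iteration formula. -/
def lowerTerms (n : ℕ) : Submodule (D.jetSubalgebra A s n) B :=
  spanPowLT (D.jetSubalgebra A s n) (D.δ^[n] s) p

variable {D s}

theorem iterate_delta_mem_jetSubalgebra (n : ℕ) : D.δ^[n] s ∈ D.jetSubalgebra A s (n + 1) :=
  Algebra.subset_adjoin ⟨n, n.lt_succ_self, rfl⟩

theorem jetSubalgebra_le_succ (n : ℕ) : D.jetSubalgebra A s n ≤ D.jetSubalgebra A s (n + 1) :=
  Algebra.adjoin_mono fun _ ⟨m, hm, hx⟩ => ⟨m, hm.trans n.lt_succ_self, hx⟩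

theorem mem_jetSubalgebra_succ_of_mem_lowerTerms {x : B} (hx : x ∈ D.lowerTerms A s n) :
    x ∈ D.jetSubalgebra A s (n + 1) :=
  spanPowLT_subset (jetSubalgebra_le_succ n) (iterate_delta_mem_jetSubalgebra n) hx

theorem delta_mem_jetSubalgebra (hD : ∀ a, D.δ (algebraMap A B a) = algebraMap A B (DA.δ a))
    {x : B} (hx : x ∈ D.jetSubalgebra A s n) : D.δ x ∈ D.jetSubalgebra A s (n + 1) := by
  have hle := jetSubalgebra_le_succ (A := A) (D := D) (s := s) n
  induction hx using Algebra.adjoin_induction with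
  | mem x hx =>
    obtain ⟨m, hm, rfl⟩ := hx
    exact Algebra.subset_adjoin ⟨m + 1, Nat.succ_lt_succ hm, (Function.iterate_succ_apply' ..).symm⟩
  | algebraMap a => exact hD a ▸ Subalgebra.algebraMap_mem _ _
  | add x y hx hy ihx ihy =>
    rw [delta_add_eq_sub_powAddDefect]
    exact sub_mem (add_mem ihx ihy) (powAddDefect_mem (hle hx) (hle hy))
  | mul x y hx hy ihx ihy =>
    rw [D.delta_mul]
    exact add_mem (add_mem (mul_mem ihx (pow_mem (hle hy) _)) (mul_mem (pow_mem (hle hx) _) ihy))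
      (mul_mem (mul_mem (natCast_mem _ _) ihx) ihy)

variable [Fact p.Prime]

theorem mem_lowerTerms_of_mem_jetSubalgebra {x : B} (hx : x ∈ D.jetSubalgebra A s n) :
    x ∈ D.lowerTerms A s n :=
  mem_spanPowLT_of_mem hx (Fact.out : p.Prime).pos

theorem delta_add_smodEq {x y : B} (hx : x ∈ D.jetSubalgebra A s n)
    (hy : y ∈ D.jetSubalgebra A s n) : D.δ (x + y) ≡ D.δ x + D.δ y [SMOD D.lowerTerms A s n] := by
  rw [SModEq.sub_mem, delta_add_eq_sub_powAddDefect, sub_sub_cancel_left]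
  exact neg_mem (mem_lowerTerms_of_mem_jetSubalgebra (powAddDefect_mem hx hy))

theorem delta_algebraMap_mul_add_smodEq
    (hD : ∀ a, D.δ (algebraMap A B a) = algebraMap A B (DA.δ a)) (a : A) {q : B}
    (hq : q ∈ D.jetSubalgebra A s n) :
    D.δ (algebraMap A B a * D.δ^[n] s + q) ≡
      algebraMap A B (DA.frobeniusLift a) * D.δ^[n + 1] s +
        algebraMap A B (DA.δ a) * (D.δ^[n] s) ^ p + D.δ q [SMOD D.lowerTerms A s n] := by
  have hdefect : powAddDefect p (algebraMap A B a * D.δ^[n] s) q ∈ D.lowerTerms A s n :=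
    powAddDefect_mul_mem_spanPowLT (Subalgebra.algebraMap_mem _ a) hq
  rw [SModEq.sub_mem, delta_add_eq_sub_powAddDefect, delta_mul_eq_frobeniusLift, hD,
    map_frobeniusLift hD, Function.iterate_succ_apply']
  convert neg_mem hdefect using 1
  ring

theorem delta_pow_mem_spanPowLT {S : Subalgebra A B} {x : B} (hx : x ∈ S) {m d : ℕ} (hm : m < d) :
    D.δ (x ^ m) ∈ spanPowLT S (D.δ x) d := by
  rw [delta_pow]
  refine sum_mem fun j hj => mul_pow_mem_spanPowLT ?_
    (lt_of_le_of_lt (Finset.mem_range.1 hj) hm)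
  exact mul_mem (mul_mem (natCast_mem _ _) (pow_mem (natCast_mem _ _) _))
    (pow_mem (pow_mem hx _) _)

theorem delta_mul_mem_lowerTerms (hD : ∀ a, D.δ (algebraMap A B a) = algebraMap A B (DA.δ a))
    {c x : B} (hc : c ∈ D.jetSubalgebra A s n) (hx : x ∈ D.jetSubalgebra A s (n + 1))
    (hδx : D.δ x ∈ D.lowerTerms A s (n + 1)) : D.δ (c * x) ∈ D.lowerTerms A s (n + 1) := by
  have hδc := delta_mem_jetSubalgebra hD hc
  have hφc : D.frobeniusLift c ∈ D.jetSubalgebra A s (n + 1) :=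
    add_mem (pow_mem (jetSubalgebra_le_succ n hc) _) (mul_mem (natCast_mem _ _) hδc)
  rw [delta_mul_eq_frobeniusLift]
  exact add_mem (mem_lowerTerms_of_mem_jetSubalgebra (mul_mem hδc (pow_mem hx _)))
    (mul_mem_spanPowLT hφc hδx)

theorem delta_mem_lowerTerms (hD : ∀ a, D.δ (algebraMap A B a) = algebraMap A B (DA.δ a))
    {x : B} (hx : x ∈ D.lowerTerms A s n) : D.δ x ∈ D.lowerTerms A s (n + 1) := by
  induction hx using Submodule.span_induction with
  | mem x hx =>
    obtain ⟨i, hi, rfl⟩ := hx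
    rw [lowerTerms, Function.iterate_succ_apply']
    exact delta_pow_mem_spanPowLT (iterate_delta_mem_jetSubalgebra n) (Finset.mem_range.1 hi)
  | zero =>
    rw [D.delta_zero]
    exact zero_mem _
  | add x y hx hy ihx ihy =>
    exact SModEq.zero.1 ((delta_add_smodEq (mem_jetSubalgebra_succ_of_mem_lowerTerms hx)
      (mem_jetSubalgebra_succ_of_mem_lowerTerms hy)).trans (SModEq.zero.2 (add_mem ihx ihy)))
  | smul c x hx ih =>
    exact delta_mul_mem_lowerTerms hD c.2 (mem_jetSubalgebra_succ_of_mem_lowerTerms hx) ih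

theorem delta_algebraMap_mul_pow_prime_smodEq
    (hD : ∀ a, D.δ (algebraMap A B a) = algebraMap A B (DA.δ a)) (a : A) :
    D.δ (algebraMap A B a * (D.δ^[n] s) ^ p) ≡
      algebraMap A B (p ^ (p - 1) * DA.frobeniusLift a) * (D.δ^[n + 1] s) ^ p
      [SMOD D.lowerTerms A s (n + 1)] := by
  have hs : (D.δ^[n] s) ^ p ∈ D.jetSubalgebra A s (n + 1) :=
    pow_mem (iterate_delta_mem_jetSubalgebra n) p
  have hδa : algebraMap A B (DA.δ a) * ((D.δ^[n] s) ^ p) ^ p ∈ D.lowerTerms A s (n + 1) :=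
    mem_lowerTerms_of_mem_jetSubalgebra (mul_mem (Subalgebra.algebraMap_mem _ _) (pow_mem hs p))
  have hdefect : powAddDefect p (p * D.δ^[n + 1] s) ((D.δ^[n] s) ^ p) ∈ D.lowerTerms A s (n + 1) :=
    powAddDefect_mul_mem_spanPowLT (natCast_mem _ p) hs
  rw [SModEq.sub_mem, delta_mul_eq_frobeniusLift, hD, delta_pow_prime, ← map_frobeniusLift hD,
    ← Function.iterate_succ_apply' D.δ]
  convert add_mem hδa (mul_mem_spanPowLT
    (Subalgebra.algebraMap_mem _ (DA.frobeniusLift a)) hdefect) using 1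
  simp only [map_mul, map_pow, map_natCast]
  ring

theorem delta_smodEq_succ (hD : ∀ a, D.δ (algebraMap A B a) = algebraMap A B (DA.δ a)) {a b : A}
    {x : B} (hx : x ≡ algebraMap A B a * D.δ^[n + 1] s + algebraMap A B b * (D.δ^[n] s) ^ p
      [SMOD D.lowerTerms A s n]) :
    D.δ x ≡ algebraMap A B (DA.frobeniusLift a) * D.δ^[n + 2] s +
        algebraMap A B (DA.δ a + p ^ (p - 1) * DA.frobeniusLift b) * (D.δ^[n + 1] s) ^ p
      [SMOD D.lowerTerms A s (n + 1)] := by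
  obtain ⟨r, hr, rfl⟩ : ∃ r ∈ D.lowerTerms A s n, x = algebraMap A B a * D.δ^[n + 1] s +
      (algebraMap A B b * (D.δ^[n] s) ^ p + r) :=
    ⟨_, SModEq.sub_mem.1 hx, by ring⟩
  have hr' := mem_jetSubalgebra_succ_of_mem_lowerTerms hr
  have hb : algebraMap A B b * (D.δ^[n] s) ^ p ∈ D.jetSubalgebra A s (n + 1) :=
    mul_mem (Subalgebra.algebraMap_mem _ b) (pow_mem (iterate_delta_mem_jetSubalgebra n) p)
  have hδq : D.δ (algebraMap A B b * (D.δ^[n] s) ^ p + r) ≡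
      algebraMap A B (p ^ (p - 1) * DA.frobeniusLift b) * (D.δ^[n + 1] s) ^ p + 0
      [SMOD D.lowerTerms A s (n + 1)] :=
    (delta_add_smodEq hb hr').trans ((delta_algebraMap_mul_pow_prime_smodEq hD b).add
      (SModEq.zero.2 (delta_mem_lowerTerms hD hr)))
  convert (delta_algebraMap_mul_add_smodEq hD a (add_mem hb hr')).trans (SModEq.rfl.add hδq) using 1
  rw [map_add]
  ring

theorem iterate_delta_smodEq (hD : ∀ a, D.δ (algebraMap A B a) = algebraMap A B (DA.δ a))
    (ξ T : A) (n : ℕ) :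
    D.δ^[n + 1] (algebraMap A B ξ * s - algebraMap A B T) ≡
      algebraMap A B (DA.frobeniusLift^[n + 1] ξ) * D.δ^[n + 1] s +
        algebraMap A B ((∑ m ∈ Finset.range (n + 1), (p : A) ^ (m * (p - 1))) *
          DA.frobeniusLift^[n] (DA.δ ξ)) * (D.δ^[n] s) ^ p
      [SMOD D.lowerTerms A s n] := by
  induction n with
  | zero =>
    have hδT : D.δ (algebraMap A B (-T)) ≡ 0 [SMOD D.lowerTerms A s 0] := by
      rw [SModEq.zero, hD]
      exact mem_lowerTerms_of_mem_jetSubalgebra (Subalgebra.algebraMap_mem _ _)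
    have hstart := (delta_algebraMap_mul_add_smodEq (n := 0) hD ξ
      (Subalgebra.algebraMap_mem _ (-T))).trans (SModEq.rfl.add hδT)
    simpa [sub_eq_add_neg] using hstart
  | succ n ih =>
    rw [Function.iterate_succ_apply' D.δ, Function.iterate_succ_apply' _ (n + 1) ξ,
      ← delta_iterate_add_frobeniusLift_geomSum]
    exact delta_smodEq_succ hD ih

end Jets

end DeltaStructure

theorem delta_iteration_general {p : ℕ} [Fact p.Prime] {R A B : Type*} [CommRing R] [CommRing A]
    [CommRing B] [Algebra R A] [Algebra A B] {DR : DeltaStructure p R} {DA : DeltaStructure p A}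
    {DB : DeltaStructure p B} (hRA : ∀ r, DA.δ (algebraMap R A r) = algebraMap R A (DR.δ r))
    (hAB : ∀ a, DB.δ (algebraMap A B a) = algebraMap A B (DA.δ a)) (ξ : R) (T : A) (s : B)
    (n : ℕ) :
    ∃ c : ℕ → B, (∀ ν, c ν ∈ DB.jetSubalgebra A s n) ∧
      DB.δ^[n + 1] (algebraMap A B (algebraMap R A ξ) * s - algebraMap A B T) =
        algebraMap A B (algebraMap R A (DR.frobeniusLift^[n + 1] ξ)) * DB.δ^[n + 1] s +
          algebraMap A B (algebraMap R A ((∑ m ∈ Finset.range (n + 1), (p : R) ^ (m * (p - 1))) *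
            DR.frobeniusLift^[n] (DR.δ ξ))) * (DB.δ^[n] s) ^ p +
          ∑ ν ∈ Finset.range p, c ν * (DB.δ^[n] s) ^ ν := by
  have hlower := SModEq.sub_mem.1
    (DeltaStructure.iterate_delta_smodEq (s := s) hAB (algebraMap R A ξ) T n)
  obtain ⟨c, hc, hsum⟩ := exists_eq_sum_of_mem_spanPowLT hlower
  refine ⟨c, hc, ?_⟩
  simpa only [map_mul, map_sum, map_pow, map_natCast, hRA,
    DeltaStructure.map_frobeniusLift_iterate hRA] using sub_eq_iff_eq_add'.1 hsum

open MvPolynomial in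
/-- Iteration lemma: with `B = A[S_0, S_1, …]` (a polynomial ring over the δ-`R`-algebra
`A` with `δ(S_n) = S_{n+1}`) and `B_k` the `A`-subalgebra generated by `S_0, …, S_k`, for
every `n ≥ 1` one has
`δ^n(ξ·S − T) = φ^n(ξ)·S_n + (∑_{m=0}^{n−1} p^{m(p−1)})·φ^{n−1}(δ(ξ))·S_{n−1}^p
  + ∑_{ν=0}^{p−1} c_ν·S_{n−1}^ν` with `c_ν ∈ B_{n−2}`. -/
theorem delta_iteration (p : ℕ) (hp : p.Prime) (R A : Type*) [CommRing R] [CommRing A]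
    [Algebra R A] (DR : DeltaStructure p R) (DA : DeltaStructure p A)
    (halg : ∀ r : R, DA.δ (algebraMap R A r) = algebraMap R A (DR.δ r))
    (ξ : R) (T : A)
    (DB : DeltaStructure p (MvPolynomial ℕ A))
    (hBC : ∀ a : A, DB.δ (C a) = C (DA.δ a))
    (hBX : ∀ n : ℕ, DB.δ (X n) = X (n + 1))
    (n : ℕ) (hn : 0 < n) :
    ∃ c : ℕ → MvPolynomial ℕ A,
      (∀ ν : ℕ, ν < p →
        c ν ∈ Algebra.adjoin A {x : MvPolynomial ℕ A | ∃ m : ℕ, m < n - 1 ∧ x = X m}) ∧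
      DB.δ^[n] (C (algebraMap R A ξ) * X 0 - C T)
        = C (algebraMap R A ((fun r : R => r ^ p + (p : R) * DR.δ r)^[n] ξ)) * X n
          + C (algebraMap R A
              ((∑ m ∈ Finset.range n, (p : R) ^ (m * (p - 1))) *
                (fun r : R => r ^ p + (p : R) * DR.δ r)^[n - 1] (DR.δ ξ)))
            * X (n - 1) ^ p
          + ∑ ν ∈ Finset.range p, c ν * X (n - 1) ^ ν := by
  have : Fact p.Prime := ⟨hp⟩
  obtain ⟨n, rfl⟩ := Nat.exists_eq_add_one_of_ne_zero hn.ne'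
  obtain ⟨c, hc, h⟩ := delta_iteration_general halg hBC ξ T (X 0) n
  simp only [DeltaStructure.jetSubalgebra,
    DeltaStructure.iterate_delta_of_delta_eq_succ hBX] at hc h
  exact ⟨c, fun ν _ => hc ν, h⟩
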